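/- Define h : (ℕ → Bool) → ℝ by h(x) = Σ_{i=0}^∞ 2·χ(x(i))/3^{i+1}, where χ(true) = 1 and χ(false) = 0. Let (x_k)_{k∈ℕ} be a sequence of elements of ℕ → Bool and let y be a real number that is a cluster point of the sequence (h(x_k))_{k∈ℕ}, i.e. for every ε > 0 and every s there exists k ≥ s with |h(x_k) − y| < ε. Then there exists x : ℕ → Bool with h(x) = y such that x is a cluster point of (x_k) in Cantor space, i.e. for every n and every s there exists k ≥ s with x_k(i) = x(i) for all i ≤ n. -/

import Mathlib

/-- The Cantor middle-thirds embedding of Cantor space into `[0,1]`. -/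
noncomputable def cantorMap (x : ℕ → Bool) : ℝ :=
  ∑' i : ℕ, 2 * (if x i then (1 : ℝ) else 0) / 3 ^ (i + 1)

theorem cantorMap_continuous : Continuous cantorMap := by
  unfold cantorMap
  refine continuous_tsum (u := fun i : ℕ => 2 * (1 / 3 : ℝ) ^ (i + 1)) (fun i => ?_) ?_ ?_
  · have h : Continuous (fun b : Bool => 2 * (if b then (1 : ℝ) else 0) / 3 ^ (i + 1)) :=
      continuous_of_discreteTopology
    exact h.comp (continuous_apply i)
  · exact ((summable_nat_add_iff 1).2
      (summable_geometric_of_lt_one (by norm_num) (by norm_num))).mul_left 2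
  · intro i b
    by_cases h : b i = true <;> simp [h, div_eq_mul_inv]

/-- If `y` is a cluster point of the sequence `(h(x_k))` of real numbers, then
`y = h(x)` for some `x : ℕ → Bool` which is a cluster point of `(x_k)` in
Cantor space. -/
theorem cantorMap_clusterPoint (x : ℕ → ℕ → Bool) (y : ℝ)
    (hy : ∀ ε : ℝ, 0 < ε → ∀ s : ℕ, ∃ k ≥ s, |cantorMap (x k) - y| < ε) :
    ∃ z : ℕ → Bool, cantorMap z = y ∧
      ∀ n : ℕ, ∀ s : ℕ, ∃ k ≥ s, ∀ i ≤ n, x k i = z i := by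
  obtain ⟨k, hk⟩ : ∃ k : ℕ → ℕ, ∀ n, k n ≥ n ∧
      |cantorMap (x (k n)) - y| < 1 / ((n : ℝ) + 1) := by
    have h := fun n : ℕ => hy (1 / ((n : ℝ) + 1)) (by positivity) n
    choose k h1 h2 using h
    exact ⟨k, fun n => ⟨h1 n, h2 n⟩⟩
  have hlim : Filter.Tendsto (fun n => cantorMap (x (k n))) Filter.atTop (nhds y) := by
    rw [tendsto_iff_dist_tendsto_zero]
    refine squeeze_zero (fun _ => dist_nonneg) (fun n => ?_)
      (tendsto_one_div_add_atTop_nhds_zero_nat (𝕜 := ℝ))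
    rw [Real.dist_eq]
    exact (hk n).2.le
  obtain ⟨z, ψ, hψ, hz⟩ := CompactSpace.tendsto_subseq (fun n => x (k n))
  refine ⟨z, ?_, fun n s => ?_⟩
  · exact tendsto_nhds_unique ((cantorMap_continuous.tendsto z).comp hz)
      (hlim.comp hψ.tendsto_atTop)
  · have hev : ∀ᶠ m in Filter.atTop, ∀ i ∈ Set.Iic n, x (k (ψ m)) i = z i := by
      rw [Filter.eventually_all_finite (Set.finite_Iic n)]
      intro i _
      have h := (tendsto_pi_nhds.1 hz) i
      rw [nhds_discrete, Filter.tendsto_pure] at h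
      exact h
    obtain ⟨m, hm, hms⟩ := (hev.and (Filter.eventually_ge_atTop s)).exists
    exact ⟨k (ψ m), hms.trans ((hψ.id_le m).trans (hk _).1), hm⟩
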